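/- Let D′ ⋐ D ⊂ ℝ^{2n+1} be bounded open sets, let s ≥ 2n + 3 be an integer, and let C₀ > 0. Then there exists a constant C > 0 such that for all smooth functions f, f′ : cl(D) → ℝ satisfying f(x) ≥ 1/C₀ and f′(x) ≥ 1/C₀ for all x ∈ cl(D′), one has ‖1/f − 1/f′‖_{D′,s} ≤ C (1 + ‖f‖_{D,s})^s (1 + ‖f′‖_{D,s})^s ‖f − f′‖_{D,s}. -/

import Mathlib

open MeasureTheory Bornology

noncomputable section

variable {E : Type*} [NormedAddCommGroup E] [NormedSpace ℝ E]

/-- The standard contact form `η₀ = dx^{2n+1} - Σ x^{n+j} dx^j` on `ℝ^{2n+1}`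
(0-indexed coordinates): `η₀(x)(v) = v_{2n} - Σ_{j<n} x_{n+j} v_j`. -/
def eta0 (n : ℕ) (x v : Fin (2*n+1) → ℝ) : ℝ :=
  v ⟨2*n, by omega⟩ -
    ∑ j : Fin n, x ⟨n + j, by have := j.2; omega⟩ * v ⟨j, by have := j.2; omega⟩

/-- `dη₀ = Σ_{j<n} dx^j ∧ dx^{n+j}`. -/
def dEta0 (n : ℕ) (u v : Fin (2*n+1) → ℝ) : ℝ :=
  ∑ j : Fin n,
    (u ⟨j, by have := j.2; omega⟩ * v ⟨n + j, by have := j.2; omega⟩ -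
     u ⟨n + j, by have := j.2; omega⟩ * v ⟨j, by have := j.2; omega⟩)

/-- The horizontal vector fields: for `j < n`, `X_j = ∂_j + x_{n+j} ∂_{2n}`;
for `n ≤ j < 2n`, `X_j = ∂_j` (0-indexed). -/
def Xvec (n : ℕ) (j : Fin (2*n)) (x : Fin (2*n+1) → ℝ) : Fin (2*n+1) → ℝ :=
  if h : (j : ℕ) < n then
    (Pi.single (⟨j, by omega⟩ : Fin (2*n+1)) 1 : Fin (2*n+1) → ℝ)
      + x ⟨n + j, by omega⟩ • (Pi.single (⟨2*n, by omega⟩ : Fin (2*n+1)) 1 : Fin (2*n+1) → ℝ)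
  else
    (Pi.single (⟨j, by have := j.2; omega⟩ : Fin (2*n+1)) 1 : Fin (2*n+1) → ℝ)

/-- The horizontal derivative `X_j f`. -/
def hDeriv (n : ℕ) (j : Fin (2*n)) (f : (Fin (2*n+1) → ℝ) → E)
    (x : Fin (2*n+1) → ℝ) : E :=
  fderiv ℝ f x (Xvec n j x)

/-- Iterated horizontal derivative `X_I f = X_{i₁} ⋯ X_{i_t} f`. -/
def XI (n : ℕ) : List (Fin (2*n)) → ((Fin (2*n+1) → ℝ) → E) → ((Fin (2*n+1) → ℝ) → E)
  | [], f => f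
  | j :: I, f => hDeriv n j (XI n I f)

/-- Squared Folland–Stein norm `‖f‖_{D,s}² = Σ_{|I| ≤ s} ∫_D ‖X_I f‖²`. -/
def fsNormSq (n : ℕ) (D : Set (Fin (2*n+1) → ℝ)) (s : ℕ)
    (f : (Fin (2*n+1) → ℝ) → E) : ℝ :=
  ∑ t ∈ Finset.range (s+1), ∑ I : Fin t → Fin (2*n),
    ∫ x in D, ‖XI n (List.ofFn I) f x‖^2

/-- The Folland–Stein norm `‖f‖_{D,s}`. -/
def fsNorm (n : ℕ) (D : Set (Fin (2*n+1) → ℝ)) (s : ℕ)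
    (f : (Fin (2*n+1) → ℝ) → E) : ℝ :=
  Real.sqrt (fsNormSq n D s f)

/-- Ordinary partial derivative `∂_i f`. -/
def pDeriv (n : ℕ) (i : Fin (2*n+1)) (f : (Fin (2*n+1) → ℝ) → E)
    (x : Fin (2*n+1) → ℝ) : E :=
  fderiv ℝ f x (Pi.single i 1 : Fin (2*n+1) → ℝ)

/-- Iterated ordinary partial derivative. -/
def pI (n : ℕ) : List (Fin (2*n+1)) → ((Fin (2*n+1) → ℝ) → E) → ((Fin (2*n+1) → ℝ) → E)
  | [], f => f
  | i :: I, f => pDeriv n i (pI n I f)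

/-- The Reeb derivative `T₀ f = ∂_{2n} f` (0-indexed). -/
def T0Deriv (n : ℕ) (f : (Fin (2*n+1) → ℝ) → E) (x : Fin (2*n+1) → ℝ) : E :=
  fderiv ℝ f x (Pi.single (⟨2*n, by omega⟩ : Fin (2*n+1)) 1 : Fin (2*n+1) → ℝ)

/-- `X` is a contact vector field on `D`:  `dη₀(X, X_j) + X_j(η₀(X)) = 0` for all
horizontal `X_j`. -/
def IsContactVF (n : ℕ) (D : Set (Fin (2*n+1) → ℝ))
    (X : (Fin (2*n+1) → ℝ) → (Fin (2*n+1) → ℝ)) : Prop :=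
  ∀ j : Fin (2*n), ∀ x ∈ D,
    dEta0 n (X x) (Xvec n j x) + hDeriv n j (fun y => eta0 n y (X y)) x = 0

/-- The contact vector field with generating function `g`:
`X_g = g T₀ + Σ_j (-(X_{n+j} g) X_j + (X_j g) X_{n+j})`. -/
def genVF (n : ℕ) (g : (Fin (2*n+1) → ℝ) → ℝ) (x : Fin (2*n+1) → ℝ) :
    Fin (2*n+1) → ℝ :=
  g x • (Pi.single (⟨2*n, by omega⟩ : Fin (2*n+1)) 1 : Fin (2*n+1) → ℝ)
  + ∑ j : Fin n,
      (-(hDeriv n (⟨n + j, by have := j.2; omega⟩ : Fin (2*n)) g x) •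
          Xvec n (⟨j, by have := j.2; omega⟩ : Fin (2*n)) x
        + (hDeriv n (⟨j, by have := j.2; omega⟩ : Fin (2*n)) g x) •
          Xvec n (⟨n + j, by have := j.2; omega⟩ : Fin (2*n)) x)


open scoped ContDiff

theorem Xvec_contDiff (n : ℕ) (j : Fin (2*n)) : ContDiff ℝ ∞ (Xvec n j) := by
  unfold Xvec
  split_ifs with h
  · fun_prop
  · fun_prop

theorem hDeriv_contDiffOn {n : ℕ} {U : Set (Fin (2*n+1) → ℝ)} (hU : IsOpen U) (j : Fin (2*n))
    {f : (Fin (2*n+1) → ℝ) → ℝ} (hf : ContDiffOn ℝ ∞ f U) :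
    ContDiffOn ℝ ∞ (hDeriv n j f) U := by
  have h1 : ContDiffOn ℝ ∞ (fderiv ℝ f) U := hf.fderiv_of_isOpen hU (by simp)
  exact h1.clm_apply (Xvec_contDiff n j).contDiffOn

theorem XI_contDiffOn {n : ℕ} {U : Set (Fin (2*n+1) → ℝ)} (hU : IsOpen U) (I : List (Fin (2*n)))
    {f : (Fin (2*n+1) → ℝ) → ℝ} (hf : ContDiffOn ℝ ∞ f U) :
    ContDiffOn ℝ ∞ (XI n I f) U := by
  induction I with
  | nil => exact hf
  | cons j I ih => exact hDeriv_contDiffOn hU j ih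

theorem hDeriv_congr {n : ℕ} {U : Set (Fin (2*n+1) → ℝ)} (hU : IsOpen U) (j : Fin (2*n))
    {f g : (Fin (2*n+1) → ℝ) → ℝ} (h : Set.EqOn f g U) :
    Set.EqOn (hDeriv n j f) (hDeriv n j g) U := by
  intro x hx
  unfold hDeriv
  rw [Filter.EventuallyEq.fderiv_eq (h.eventuallyEq_of_mem (hU.mem_nhds hx))]

theorem XI_congr {n : ℕ} {U : Set (Fin (2*n+1) → ℝ)} (hU : IsOpen U) (I : List (Fin (2*n)))
    {f g : (Fin (2*n+1) → ℝ) → ℝ} (h : Set.EqOn f g U) :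
    Set.EqOn (XI n I f) (XI n I g) U := by
  induction I with
  | nil => exact h
  | cons j I ih => exact hDeriv_congr hU j ih

theorem XI_append {n : ℕ} (I J : List (Fin (2*n))) (f : (Fin (2*n+1) → ℝ) → ℝ) :
    XI n (I ++ J) f = XI n I (XI n J f) := by
  induction I with
  | nil => rfl
  | cons j I ih => simp only [List.cons_append, XI, ih]

theorem XI_const {n : ℕ} (j : Fin (2*n)) (I : List (Fin (2*n))) (c : ℝ)
    (x : Fin (2*n+1) → ℝ) :
    XI n (j :: I) (fun _ => c) x = 0 := by
  have h : ∀ I : List (Fin (2*n)), ∃ c' : ℝ, XI n I (fun _ => c) = fun _ => c' := by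
    intro I
    induction I with
    | nil => exact ⟨c, rfl⟩
    | cons j I ih =>
      obtain ⟨c', h⟩ := ih
      refine ⟨0, ?_⟩
      funext y
      simp [XI, h, hDeriv]
  obtain ⟨c', h⟩ := h I
  simp [XI, h, hDeriv]

theorem diffAt_of_smooth {n : ℕ} {U : Set (Fin (2*n+1) → ℝ)} (hU : IsOpen U)
    {f : (Fin (2*n+1) → ℝ) → ℝ} (hf : ContDiffOn ℝ ∞ f U) {x} (hx : x ∈ U) :
    DifferentiableAt ℝ f x :=
  (hf.contDiffAt (hU.mem_nhds hx)).differentiableAt (by simp)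

theorem hDeriv_mul {n : ℕ} (j : Fin (2*n)) {u v : (Fin (2*n+1) → ℝ) → ℝ} {x}
    (hu : DifferentiableAt ℝ u x) (hv : DifferentiableAt ℝ v x) :
    hDeriv n j (fun y => u y * v y) x = hDeriv n j u x * v x + u x * hDeriv n j v x := by
  unfold hDeriv
  rw [fderiv_fun_mul hu hv]
  simp
  ring

theorem hDeriv_add {n : ℕ} (j : Fin (2*n)) {u v : (Fin (2*n+1) → ℝ) → ℝ} {x}
    (hu : DifferentiableAt ℝ u x) (hv : DifferentiableAt ℝ v x) :
    hDeriv n j (fun y => u y + v y) x = hDeriv n j u x + hDeriv n j v x := by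
  unfold hDeriv
  rw [fderiv_fun_add hu hv]
  simp

/-- nontrivial Leibniz splittings -/
def spl {α : Type} : List α → List (List α × List α)
  | [] => []
  | j :: I => ([j], I) :: ((spl I).flatMap fun q => [(j :: q.1, q.2), (q.1, j :: q.2)])

theorem spl_length {α : Type} (I : List α) : (spl I).length + 1 = 2 ^ I.length := by
  induction I with
  | nil => simp [spl]
  | cons j I ih =>
    simp [spl, pow_succ]
    omega

theorem spl_mem {α : Type} (I : List α) : ∀ q ∈ spl I,
    1 ≤ q.1.length ∧ q.1.length + q.2.length = I.length := by
  induction I with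
  | nil => simp [spl]
  | cons j I ih =>
    intro q hq
    simp only [spl, List.mem_cons, List.mem_flatMap, List.not_mem_nil, or_false] at hq
    rcases hq with rfl | ⟨q', hq', rfl | rfl⟩
    · simp; omega
    · have := ih q' hq'; simp; omega
    · have := ih q' hq'; simp; omega

theorem smooth_listsum {n : ℕ} {U : Set (Fin (2*n+1) → ℝ)} 
    (h : List (Fin (2*n)) × List (Fin (2*n)) → (Fin (2*n+1) → ℝ) → ℝ)
    (hh : ∀ q, ContDiffOn ℝ ∞ (h q) U) (L : List (List (Fin (2*n)) × List (Fin (2*n)))) :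
    ContDiffOn ℝ ∞ (fun x => (L.map fun q => h q x).sum) U := by
  induction L with
  | nil => simpa using contDiffOn_const
  | cons q L ih => simpa using (hh q).add ih

theorem leibniz_list {n : ℕ} {U : Set (Fin (2*n+1) → ℝ)} (hU : IsOpen U) (j : Fin (2*n))
    {u v : (Fin (2*n+1) → ℝ) → ℝ} (hu : ContDiffOn ℝ ∞ u U) (hv : ContDiffOn ℝ ∞ v U)
    (L : List (List (Fin (2*n)) × List (Fin (2*n)))) {x} (hx : x ∈ U) :
    hDeriv n j (fun x => (L.map fun q => XI n q.1 u x * XI n q.2 v x).sum) x =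
    ((L.flatMap fun q => [(j :: q.1, q.2), (q.1, j :: q.2)]).map
      fun q => XI n q.1 u x * XI n q.2 v x).sum := by
  induction L with
  | nil => simp [hDeriv]
  | cons q L ih =>
    simp only [List.map_cons, List.sum_cons, List.flatMap_cons, List.map_append, List.sum_append,
      List.map_nil, List.sum_nil, add_zero]
    have h1 := XI_contDiffOn hU q.1 hu
    have h2 := XI_contDiffOn hU q.2 hv
    rw [hDeriv_add j (diffAt_of_smooth hU (h1.mul h2) hx)
      (diffAt_of_smooth hU (smooth_listsum (fun q x => XI n q.1 u x * XI n q.2 v x)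
        (fun q => (XI_contDiffOn hU q.1 hu).mul (XI_contDiffOn hU q.2 hv)) L) hx), ih,
      hDeriv_mul j (diffAt_of_smooth hU h1 hx) (diffAt_of_smooth hU h2 hx)]
    rfl

theorem leibniz {n : ℕ} {U : Set (Fin (2*n+1) → ℝ)} (hU : IsOpen U) 
    {u v : (Fin (2*n+1) → ℝ) → ℝ} (hu : ContDiffOn ℝ ∞ u U) (hv : ContDiffOn ℝ ∞ v U)
    (I : List (Fin (2*n))) : Set.EqOn (XI n I (fun y => u y * v y))
      (fun x => u x * XI n I v x + ((spl I).map fun q => XI n q.1 u x * XI n q.2 v x).sum) U := by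
  induction I with
  | nil => intro x hx; simp [spl, XI]
  | cons j I ih =>
    intro x hx
    have := hDeriv_congr hU j ih hx
    simp only [XI] at this ⊢
    rw [this]
    have h2 := XI_contDiffOn hU I hv
    rw [hDeriv_add j (diffAt_of_smooth hU (hu.mul h2) hx)
      (diffAt_of_smooth hU (smooth_listsum (fun q x => XI n q.1 u x * XI n q.2 v x)
        (fun q => (XI_contDiffOn hU q.1 hu).mul (XI_contDiffOn hU q.2 hv)) _) hx),
        leibniz_list hU j hu hv _ hx, 
        hDeriv_mul j (diffAt_of_smooth hU hu hx) (diffAt_of_smooth hU h2 hx)]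
    simp only [spl, List.map_cons, List.sum_cons, XI]
    ring


/-- bounds -/
def Bd (n s : ℕ) (U : Set (Fin (2*n+1) → ℝ)) (t : ℕ) (a : ℝ) (u : (Fin (2*n+1) → ℝ) → ℝ) : Prop :=
  (∀ I : List (Fin (2*n)), I.length ≤ t → 2 * I.length ≤ s → ∀ x ∈ U, |XI n I u x| ≤ a) ∧
  (∀ I : List (Fin (2*n)), I.length ≤ t →
    eLpNorm (XI n I u) 2 (volume.restrict U) ≤ ENNReal.ofReal a)

theorem Bd.mono {n s t : ℕ} {U : Set (Fin (2*n+1) → ℝ)} {a b : ℝ} {u : (Fin (2*n+1) → ℝ) → ℝ}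
    (h : Bd n s U t a u) (hab : a ≤ b) : Bd n s U t b u :=
  ⟨fun I h1 h2 x hx => (h.1 I h1 h2 x hx).trans hab,
   fun I h1 => (h.2 I h1).trans (ENNReal.ofReal_le_ofReal hab)⟩

theorem eLp_mul_left {n : ℕ} {U : Set (Fin (2*n+1) → ℝ)} (hU : IsOpen U) {a b : ℝ}
    (ha : 0 ≤ a) {g h k : (Fin (2*n+1) → ℝ) → ℝ} (hk : ∀ x ∈ U, |k x| ≤ |g x| * |h x|)
    (hg : ∀ x ∈ U, |g x| ≤ a)
    (hh : eLpNorm h 2 (volume.restrict U) ≤ ENNReal.ofReal b) :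
    eLpNorm k 2 (volume.restrict U) ≤ ENNReal.ofReal (a * b) := by
  rw [ENNReal.ofReal_mul ha]
  refine le_trans (eLpNorm_le_mul_eLpNorm_of_ae_le_mul (c := a) (g := h) ?_ 2)
    (mul_le_mul_right hh _)
  refine (ae_restrict_iff' hU.measurableSet).2 (Filter.Eventually.of_forall fun x hx => ?_)
  simp only [Real.norm_eq_abs]
  exact (hk x hx).trans (mul_le_mul_of_nonneg_right (hg x hx) (abs_nonneg _))

theorem listsum_abs {β : Type} (L : List β) (h : β → ℝ) {A : ℝ} (hA : ∀ q ∈ L, |h q| ≤ A) :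
    |(L.map h).sum| ≤ L.length * A := by
  induction L with
  | nil => simp
  | cons q L ih =>
    simp only [List.map_cons, List.sum_cons, List.length_cons, Nat.cast_add, Nat.cast_one]
    have h1 := hA q (by simp)
    have h2 := ih (fun q hq => hA q (by simp [hq]))
    have := abs_add_le (h q) (L.map h).sum
    nlinarith

theorem listsum_eLp {n : ℕ} {U : Set (Fin (2*n+1) → ℝ)} (hU : IsOpen U)
    (h : List (Fin (2*n)) × List (Fin (2*n)) → (Fin (2*n+1) → ℝ) → ℝ)
    (hh : ∀ q, ContDiffOn ℝ ∞ (h q) U) (L : List (List (Fin (2*n)) × List (Fin (2*n))))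
    {A : ℝ} (hA0 : 0 ≤ A)
    (hA : ∀ q ∈ L, eLpNorm (h q) 2 (volume.restrict U) ≤ ENNReal.ofReal A) :
    eLpNorm (fun x => (L.map fun q => h q x).sum) 2 (volume.restrict U)
      ≤ ENNReal.ofReal (L.length * A) := by
  induction L with
  | nil => simp
  | cons q L ih =>
    simp only [List.map_cons, List.sum_cons, List.length_cons, Nat.cast_add, Nat.cast_one]
    have h1 := hA q (by simp)
    have h2 := ih (fun q hq => hA q (by simp [hq]))
    refine (eLpNorm_add_le (f := h q) (g := fun x => (L.map fun q => h q x).sum)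
      ((hh q).continuousOn.aestronglyMeasurable hU.measurableSet)
      ((smooth_listsum h hh L).continuousOn.aestronglyMeasurable hU.measurableSet) 
      (by norm_num)).trans ?_
    refine (add_le_add h1 h2).trans ?_
    rw [← ENNReal.ofReal_add hA0 (by positivity)]
    apply ENNReal.ofReal_le_ofReal
    linarith

theorem Bd_term {n s : ℕ} {U : Set (Fin (2*n+1) → ℝ)} (hU : IsOpen U) {a b : ℝ} 
    (ha : 0 ≤ a) (hb : 0 ≤ b) {t t' : ℕ}
    {u v : (Fin (2*n+1) → ℝ) → ℝ} (hu : Bd n s U t a u) (hv : Bd n s U t' b v)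
    (J K : List (Fin (2*n))) (hJ : J.length ≤ t) (hK : K.length ≤ t')
    (hs : J.length + K.length ≤ s) :
    eLpNorm (fun x => XI n J u x * XI n K v x) 2 (volume.restrict U) ≤ ENNReal.ofReal (a * b) := by
  by_cases h : 2 * J.length ≤ s
  · exact eLp_mul_left hU ha (fun x _ => (abs_mul _ _).le) (hu.1 J hJ h) (hv.2 K hK)
  · rw [mul_comm a b]
    exact eLp_mul_left hU hb (fun x _ => by rw [abs_mul, mul_comm])
      (hv.1 K hK (by omega)) (hu.2 J hJ)

theorem Bd_mul {n s : ℕ} {U : Set (Fin (2*n+1) → ℝ)} (hU : IsOpen U) {a b : ℝ} 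
    (ha : 0 ≤ a) (hb : 0 ≤ b)
    {u v : (Fin (2*n+1) → ℝ) → ℝ} (hus : ContDiffOn ℝ ∞ u U) (hvs : ContDiffOn ℝ ∞ v U)
    (hu : Bd n s U s a u) (hv : Bd n s U s b v) :
    Bd n s U s (2 ^ s * (a * b)) (fun x => u x * v x) := by
  have hlen : ∀ I : List (Fin (2*n)), I.length ≤ s → ((spl I).length : ℝ) + 1 ≤ 2 ^ s := by
    intro I hI
    have := spl_length I
    have h2 : (spl I).length + 1 ≤ 2 ^ s := this ▸ Nat.pow_le_pow_right (by norm_num) hI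
    exact_mod_cast h2
  have hab : 0 ≤ a * b := mul_nonneg ha hb
  constructor
  · intro I hI h2 x hx
    rw [leibniz hU hus hvs I hx]
    have e1 : |u x * XI n I v x| ≤ a * b := by
      rw [abs_mul]
      exact mul_le_mul (hu.1 [] (by simp) (by simp) x hx) (hv.1 I hI h2 x hx) (abs_nonneg _) ha
    have e2 : |((spl I).map fun q => XI n q.1 u x * XI n q.2 v x).sum|
        ≤ (spl I).length * (a * b) := by
      apply listsum_abs
      intro q hq
      have := spl_mem I q hq
      rw [abs_mul]
      exact mul_le_mul (hu.1 _ (by omega) (by omega) x hx) (hv.1 _ (by omega) (by omega) x hx) 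
        (abs_nonneg _) ha
    have := abs_add_le (u x * XI n I v x) ((spl I).map fun q => XI n q.1 u x * XI n q.2 v x).sum
    have := hlen I hI
    nlinarith
  · intro I hI
    have hsm : ∀ q : List (Fin (2*n)) × List (Fin (2*n)), 
        ContDiffOn ℝ ∞ (fun x => XI n q.1 u x * XI n q.2 v x) U :=
      fun q => (XI_contDiffOn hU q.1 hus).mul (XI_contDiffOn hU q.2 hvs)
    have e0 : eLpNorm (XI n I fun x => u x * v x) 2 (volume.restrict U) =
        eLpNorm (fun x => u x * XI n I v x + 
          ((spl I).map fun q => XI n q.1 u x * XI n q.2 v x).sum) 2 (volume.restrict U) := by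
      apply eLpNorm_congr_ae
      exact (ae_restrict_iff' hU.measurableSet).2 (Filter.Eventually.of_forall 
        fun x hx => leibniz hU hus hvs I hx)
    rw [e0]
    have e1 : eLpNorm (fun x => u x * XI n I v x) 2 (volume.restrict U) ≤ ENNReal.ofReal (a*b) :=
      Bd_term hU ha hb hu hv [] I (by simp) hI (by simpa using hI)
    have e2 : eLpNorm (fun x => ((spl I).map fun q => XI n q.1 u x * XI n q.2 v x).sum) 2
        (volume.restrict U) ≤ ENNReal.ofReal ((spl I).length * (a * b)) := by
      apply listsum_eLp hU (fun q x => XI n q.1 u x * XI n q.2 v x) hsm _ hab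
      intro q hq
      have := spl_mem I q hq
      exact Bd_term hU ha hb hu hv _ _ (by omega) (by omega) (by omega)
    refine (eLpNorm_add_le (f := fun x => u x * XI n I v x) 
      (g := fun x => ((spl I).map fun q => XI n q.1 u x * XI n q.2 v x).sum)
      ((hsm ([], I)).continuousOn.aestronglyMeasurable hU.measurableSet)
      ((smooth_listsum (fun q x => XI n q.1 u x * XI n q.2 v x) hsm (spl I)).continuousOn.aestronglyMeasurable hU.measurableSet) 
      (by norm_num)).trans ?_
    refine (add_le_add e1 e2).trans ?_
    rw [← ENNReal.ofReal_add hab (by positivity)]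
    apply ENNReal.ofReal_le_ofReal
    have := hlen I hI
    nlinarith

theorem Bd_inv {n s : ℕ} {U : Set (Fin (2*n+1) → ℝ)} (hU : IsOpen U) {a C₀ κ c : ℝ} 
    (ha : 0 ≤ a) (hC : 0 ≤ C₀) (hκ : 0 ≤ κ) (hc : |c| = 1)
    {u v : (Fin (2*n+1) → ℝ) → ℝ} (hus : ContDiffOn ℝ ∞ u U) (hvs : ContDiffOn ℝ ∞ v U)
    (hu : Bd n s U s a u) (huv : ∀ x ∈ U, u x * v x = c) (hv : ∀ x ∈ U, |v x| ≤ C₀)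
    (hv0 : Bd n s U 0 κ v) (t : ℕ) (ht : t ≤ s) :
    Bd n s U t (κ * ((1 + C₀) * 2 ^ s * (1 + a)) ^ t) v := by
  induction t with
  | zero => simpa using hv0
  | succ t ih =>
    have ih := ih (by omega)
    set M := (1 + C₀) * 2 ^ s * (1 + a) with hM
    have h2s : (1:ℝ) ≤ 2 ^ s := one_le_pow₀ (by norm_num)
    have hM1 : 1 ≤ M := by
      have : 1 ≤ (1 + C₀) * 2 ^ s := by nlinarith
      nlinarith
    set b := κ * M ^ t with hb
    have hb0 : 0 ≤ b := by positivity
    have hbM : κ * M ^ (t+1) = b * M := by rw [hb]; ring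
    rw [hbM]
    have hmono : b ≤ b * M := by nlinarith
    have hlen : ∀ I : List (Fin (2*n)), I.length ≤ s → ((spl I).length : ℝ) ≤ 2 ^ s := by
      intro I hI
      have := spl_length I
      have h2 : (spl I).length + 1 ≤ 2 ^ s := this ▸ Nat.pow_le_pow_right (by norm_num) hI
      have : (spl I).length ≤ 2 ^ s := by omega
      exact_mod_cast this
    have key : ∀ I : List (Fin (2*n)), I.length = t + 1 → ∀ x ∈ U, |XI n I v x| ≤ |v x| * 
        |((spl I).map fun q => XI n q.1 u x * XI n q.2 v x).sum| := by
      intro I hI x hx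
      have h1 := leibniz hU hus hvs I hx
      have h2 : XI n I (fun y => u y * v y) x = 0 := by
        rw [XI_congr hU I (g := fun _ => c) (fun x hx => huv x hx) hx]
        cases I with
        | nil => simp at hI
        | cons j I => exact XI_const j I c x
      simp only [h2] at h1
      have h3 : u x * XI n I v x = - ((spl I).map fun q => XI n q.1 u x * XI n q.2 v x).sum := by
        linarith
      rw [← abs_neg (List.sum _), ← h3, ← abs_mul, ← mul_assoc, mul_comm (v x), huv x hx, abs_mul,
        hc, one_mul]
    have hbig : ∀ I : List (Fin (2*n)), I.length = t + 1 → 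
        C₀ * ((spl I).length * (a * b)) ≤ b * M := by
      intro I hI
      have := hlen I (by omega)
      have h5 : (spl I).length * (a * b) ≤ 2 ^ s * (a * b) := 
        mul_le_mul_of_nonneg_right this (by positivity)
      have h6 : C₀ * (2 ^ s * (a * b)) ≤ (1 + C₀) * (2 ^ s * ((1 + a) * b)) := by
        gcongr <;> linarith
      calc _ ≤ C₀ * (2 ^ s * (a * b)) := by gcongr
        _ ≤ _ := h6
        _ = b * M := by rw [hM]; ring
    constructor
    · intro I hI h2 x hx
      rcases Nat.lt_or_ge I.length (t+1) with h | h
      · exact (ih.1 I (by omega) h2 x hx).trans hmono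
      have hI' : I.length = t + 1 := by omega
      have e2 : |((spl I).map fun q => XI n q.1 u x * XI n q.2 v x).sum|
          ≤ (spl I).length * (a * b) := by
        apply listsum_abs
        intro q hq
        have := spl_mem I q hq
        rw [abs_mul]
        exact mul_le_mul (hu.1 _ (by omega) (by omega) x hx) (ih.1 _ (by omega) (by omega) x hx) 
          (abs_nonneg _) ha
      refine (key I hI' x hx).trans (le_trans ?_ (hbig I hI'))
      exact mul_le_mul (hv x hx) e2 (abs_nonneg _) hC
    · intro I hI
      rcases Nat.lt_or_ge I.length (t+1) with h | h
      · exact (ih.2 I (by omega)).trans (ENNReal.ofReal_le_ofReal hmono)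
      have hI' : I.length = t + 1 := by omega
      have hsm : ∀ q : List (Fin (2*n)) × List (Fin (2*n)), 
          ContDiffOn ℝ ∞ (fun x => XI n q.1 u x * XI n q.2 v x) U :=
        fun q => (XI_contDiffOn hU q.1 hus).mul (XI_contDiffOn hU q.2 hvs)
      have e2 : eLpNorm (fun x => ((spl I).map fun q => XI n q.1 u x * XI n q.2 v x).sum) 2
          (volume.restrict U) ≤ ENNReal.ofReal ((spl I).length * (a * b)) := by
        apply listsum_eLp hU (fun q x => XI n q.1 u x * XI n q.2 v x) hsm _ (by positivity)
        intro q hq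
        have := spl_mem I q hq
        exact Bd_term hU ha hb0 hu ih _ _ (by omega) (by omega) (by omega)
      refine (eLp_mul_left hU hC (key I hI') hv e2).trans (ENNReal.ofReal_le_ofReal (hbig I hI'))


/-- last coordinate direction -/
def eL (n : ℕ) : Fin (2*n+1) → ℝ := Pi.single (⟨2*n, by omega⟩ : Fin (2*n+1)) 1

/-- vertical coefficient of the horizontal field -/
def yc (n : ℕ) (j : Fin (2*n)) : (Fin (2*n+1) → ℝ) →L[ℝ] ℝ :=
  if h : (j : ℕ) < n then ContinuousLinearMap.proj (⟨n + j, by omega⟩ : Fin (2*n+1)) else 0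

theorem Xvec_eq (n : ℕ) (j : Fin (2*n)) (y : Fin (2*n+1) → ℝ) :
    Xvec n j y = Pi.single (Fin.castSucc j) 1 + yc n j y • eL n := by
  unfold Xvec yc eL
  split_ifs with h
  · rfl
  · simp; rfl

theorem yc_eL (n : ℕ) (j : Fin (2*n)) : yc n j (eL n) = 0 := by
  unfold yc eL
  split_ifs with h
  · simp [Pi.single_apply]; omega
  · simp

/-- linear part of the dilated translation -/
def hmL (n : ℕ) (p : Fin (2*n+1) → ℝ) (r : ℝ) : (Fin (2*n+1) → ℝ) →L[ℝ] (Fin (2*n+1) → ℝ) :=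
  r • ContinuousLinearMap.id ℝ _ +
    ((r^2 - r) • ContinuousLinearMap.proj (R := ℝ) (φ := fun _ : Fin (2*n+1) => ℝ) (Fin.last (2*n)) +
      r • ∑ j : Fin (2*n), yc n j p • 
        ContinuousLinearMap.proj (R := ℝ) (φ := fun _ : Fin (2*n+1) => ℝ) (Fin.castSucc j)).smulRight (eL n)

theorem hmL_apply (n : ℕ) (p z : Fin (2*n+1) → ℝ) (r : ℝ) :
    hmL n p r z = r • z + ((r^2 - r) * z (Fin.last (2*n)) + 
      r * ∑ j : Fin (2*n), yc n j p * z (Fin.castSucc j)) • eL n := by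
  simp [hmL]

/-- dilated translation -/
def hm (n : ℕ) (p : Fin (2*n+1) → ℝ) (r : ℝ) (z : Fin (2*n+1) → ℝ) : Fin (2*n+1) → ℝ :=
  p + hmL n p r z

theorem yc_hm (n : ℕ) (j : Fin (2*n)) (p z : Fin (2*n+1) → ℝ) (r : ℝ) :
    yc n j (hm n p r z) = yc n j p + r * yc n j z := by
  simp [hm, hmL_apply, yc_eL]

theorem eL_castSucc (n : ℕ) (j : Fin (2*n)) : eL n (Fin.castSucc j) = 0 := by
  unfold eL
  rw [Pi.single_eq_of_ne]
  intro h
  have := congrArg Fin.val h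
  have := j.2
  simp at *
  omega

theorem eL_last (n : ℕ) : eL n (Fin.last (2*n)) = 1 := by
  unfold eL
  exact Pi.single_eq_same _ _

theorem hmL_Xvec (n : ℕ) (j : Fin (2*n)) (p z : Fin (2*n+1) → ℝ) (r : ℝ) :
    hmL n p r (Xvec n j z) = r • Xvec n j (hm n p r z) := by
  rw [hmL_apply, Xvec_eq, Xvec_eq, yc_hm]
  have h1 : (Pi.single (Fin.castSucc j) 1 + yc n j z • eL n : Fin (2*n+1) → ℝ) (Fin.last (2*n))
     = yc n j z := by
    simp [eL_last]
  have h2 : ∀ i : Fin (2*n), (Pi.single (Fin.castSucc j) 1 + yc n j z • eL n : Fin (2*n+1) → ℝ) (Fin.castSucc i)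
     = if i = j then 1 else 0 := by
    intro i
    simp [eL_castSucc, Pi.single_apply]
  simp only [h1, h2, mul_ite, mul_one, mul_zero, Finset.sum_ite_eq', Finset.mem_univ, if_true]
  module

theorem hm_hasDerivAt (n : ℕ) (p z : Fin (2*n+1) → ℝ) (r : ℝ) :
    HasDerivAt (fun r => hm n p r z) (∑ j : Fin (2*n), z (Fin.castSucc j) • Xvec n j (hm n p r z) +
      (r * (2 * z (Fin.last (2*n)) - ∑ j : Fin (2*n), z (Fin.castSucc j) * yc n j z)) • eL n) r := by
  have h : HasDerivAt (fun r => hm n p r z) (z + ((2 * r - 1) * z (Fin.last (2*n)) + 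
      ∑ j : Fin (2*n), yc n j p * z (Fin.castSucc j)) • eL n) r := by
    simp only [hm, hmL_apply]
    apply HasDerivAt.const_add
    apply HasDerivAt.add
    · simpa using (hasDerivAt_id r).smul_const z
    · apply HasDerivAt.smul_const
      apply HasDerivAt.add
      · apply HasDerivAt.mul_const
        have h := ((hasDerivAt_id r).pow 2).sub (hasDerivAt_id r)
        simp only [id, Nat.cast_ofNat, Nat.add_one_sub_one, pow_one, mul_one] at h
        exact h
      · simpa using (hasDerivAt_id r).mul_const (∑ j : Fin (2*n), yc n j p * z (Fin.castSucc j))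
  convert h using 1
  simp only [Xvec_eq, yc_hm]
  ext i
  refine Fin.lastCases ?_ (fun k => ?_) i
  · simp [eL_last, Finset.sum_apply, mul_add, Finset.sum_add_distrib]
    have e1 : ∑ x : Fin (2*n), z x.castSucc * (r * yc n x z) = 
      r * ∑ x : Fin (2*n), z x.castSucc * yc n x z := by
      rw [Finset.mul_sum]; exact Finset.sum_congr rfl fun _ _ => by ring
    have e2 : ∑ x : Fin (2*n), z x.castSucc * yc n x p = 
      ∑ x : Fin (2*n), yc n x p * z x.castSucc := Finset.sum_congr rfl fun _ _ => by ring
    rw [e1, e2]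
    ring
  · simp [eL_castSucc, Finset.sum_apply, Pi.single_apply]

theorem hDeriv_comp_hm {n : ℕ} (j : Fin (2*n)) (p z : Fin (2*n+1) → ℝ) (r : ℝ)
    {v : (Fin (2*n+1) → ℝ) → ℝ} (hv : ContDiff ℝ ∞ v) :
    hDeriv n j (fun z => v (hm n p r z)) z = r * hDeriv n j v (hm n p r z) := by
  unfold hDeriv
  have h1 : HasFDerivAt (hm n p r) (hmL n p r) z := (hmL n p r).hasFDerivAt.const_add p
  have h2 : HasFDerivAt v (fderiv ℝ v (hm n p r z)) (hm n p r z) :=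
    (hv.differentiable (by simp) _).hasFDerivAt
  have h3 : HasFDerivAt (fun z => v (hm n p r z)) _ z := h2.comp z h1
  rw [h3.fderiv]
  simp [hmL_Xvec]

theorem hDeriv_hDeriv {n : ℕ} (i j : Fin (2*n)) (y : Fin (2*n+1) → ℝ)
    {u : (Fin (2*n+1) → ℝ) → ℝ} (hu : ContDiff ℝ ∞ u) :
    hDeriv n i (hDeriv n j u) y = fderiv ℝ (fderiv ℝ u) y (Xvec n i y) (Xvec n j y) +
      yc n j (Xvec n i y) * fderiv ℝ u y (eL n) := by
  have h1 : HasFDerivAt (fderiv ℝ u) (fderiv ℝ (fderiv ℝ u) y) y :=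
    ((hu.fderiv_right (m := ∞) (by simp)).differentiable (by simp) _).hasFDerivAt
  have h2 : HasFDerivAt (Xvec n j) ((yc n j).smulRight (eL n)) y := by
    have : Xvec n j = fun y => Pi.single (Fin.castSucc j) 1 + ((yc n j).smulRight (eL n)) y := by
      funext y; rw [Xvec_eq]; rfl
    rw [this]
    exact ((yc n j).smulRight (eL n)).hasFDerivAt.const_add _
  have h3 := h1.clm_apply h2
  have h4 : fderiv ℝ (hDeriv n j u) y = _ := h3.fderiv
  conv_lhs => unfold hDeriv
  change fderiv ℝ (hDeriv n j u) y _ = _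
  rw [h4]
  simp
  ring

theorem hcommutator {n : ℕ} (hn : 1 ≤ n) (y : Fin (2*n+1) → ℝ)
    {u : (Fin (2*n+1) → ℝ) → ℝ} (hu : ContDiff ℝ ∞ u) :
    fderiv ℝ u y (eL n) = hDeriv n ⟨n, by omega⟩ (hDeriv n ⟨0, by omega⟩ u) y - 
      hDeriv n ⟨0, by omega⟩ (hDeriv n ⟨n, by omega⟩ u) y := by
  rw [hDeriv_hDeriv _ _ _ hu, hDeriv_hDeriv _ _ _ hu]
  have hs : IsSymmSndFDerivAt ℝ u y := by
    apply (hu.contDiffAt).isSymmSndFDerivAt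
    simp only [minSmoothness_of_isRCLikeNormedField]
    exact WithTop.coe_mono (le_top : (2:ℕ∞) ≤ ⊤)
  rw [hs (Xvec n ⟨n, by omega⟩ y)]
  have e1 : yc n ⟨0, by omega⟩ (Xvec n ⟨n, by omega⟩ y) = 1 := by
    have h0 : 0 < n := hn
    simp [yc, h0, Xvec]
  have e2 : yc n ⟨n, by omega⟩ (Xvec n ⟨0, by omega⟩ y) = 0 := by
    simp [yc]
  rw [e1, e2]
  ring

theorem hDeriv_eq {n : ℕ} (j : Fin (2*n)) (g : (Fin (2*n+1) → ℝ) → ℝ) (z : Fin (2*n+1) → ℝ) :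
    hDeriv n j g z = fderiv ℝ g z (Pi.single (Fin.castSucc j) 1) + yc n j z * fderiv ℝ g z (eL n) := by
  simp [hDeriv, Xvec_eq]

theorem hDeriv_ibp {n : ℕ} (j : Fin (2*n)) {ψ w : (Fin (2*n+1) → ℝ) → ℝ}
    (hψ : ContDiff ℝ ∞ ψ) (hc : HasCompactSupport ψ) (hw : ContDiff ℝ ∞ w) :
    ∫ z, ψ z * hDeriv n j w z = - ∫ z, hDeriv n j ψ z * w z := by
  have key : ∀ (ψ : (Fin (2*n+1) → ℝ) → ℝ) (hψ : ContDiff ℝ ∞ ψ) (hc : HasCompactSupport ψ) 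
      (e : Fin (2*n+1) → ℝ), Integrable (fun x => fderiv ℝ ψ x e * w x) ∧ 
      Integrable (fun x => ψ x * fderiv ℝ w x e) ∧
      ∫ z, ψ z * fderiv ℝ w z e = - ∫ z, fderiv ℝ ψ z e * w z := by
    intro ψ hψ hc e
    have c1 : Continuous (fun x => fderiv ℝ ψ x e) := 
      (hψ.continuous_fderiv (by simp)).clm_apply continuous_const
    have c2 : Continuous (fun x => fderiv ℝ w x e) := 
      (hw.continuous_fderiv (by simp)).clm_apply continuous_const
    have s1 : HasCompactSupport (fun x => fderiv ℝ ψ x e) := hc.fderiv_apply (𝕜 := ℝ) e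
    have i1 : Integrable (fun x => fderiv ℝ ψ x e * w x) :=
      (c1.mul hw.continuous).integrable_of_hasCompactSupport (s1.mul_right)
    have i2 : Integrable (fun x => ψ x * fderiv ℝ w x e) :=
      (hψ.continuous.mul c2).integrable_of_hasCompactSupport (hc.mul_right)
    refine ⟨i1, i2, integral_mul_fderiv_eq_neg_fderiv_mul_of_integrable i1 i2 ?_ ?_ ?_⟩
    · exact (hψ.continuous.mul hw.continuous).integrable_of_hasCompactSupport (hc.mul_right)
    · exact fun x _ => hψ.differentiable (by simp) x
    · exact fun x _ => hw.differentiable (by simp) x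
  obtain ⟨a1, a2, a3⟩ := key ψ hψ hc (Pi.single (Fin.castSucc j) 1)
  obtain ⟨b1, b2, b3⟩ := key (fun z => ψ z * yc n j z) (hψ.mul (yc n j).contDiff) hc.mul_right (eL n)
  have hf : ∀ z, fderiv ℝ (fun z => ψ z * yc n j z) z (eL n) = yc n j z * fderiv ℝ ψ z (eL n) := by
    intro z
    rw [fderiv_fun_mul (hψ.differentiable (by simp) z) (yc n j).differentiableAt]
    simp [yc_eL]
  simp only [hf] at b1 b3
  have e1 : ∀ z, ψ z * hDeriv n j w z = ψ z * fderiv ℝ w z (Pi.single (Fin.castSucc j) 1) + 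
      ψ z * yc n j z * fderiv ℝ w z (eL n) := by
    intro z; rw [hDeriv_eq]; ring
  have e2 : ∀ z, hDeriv n j ψ z * w z = fderiv ℝ ψ z (Pi.single (Fin.castSucc j) 1) * w z + 
      yc n j z * fderiv ℝ ψ z (eL n) * w z := by
    intro z; rw [hDeriv_eq]; ring
  simp only [e1, e2]
  rw [integral_add a2 b2, integral_add a1 b1, a3, b3]
  ring

/-- test functions -/
def IsTest (n : ℕ) (ε : ℝ) (φ : (Fin (2*n+1) → ℝ) → ℝ) : Prop :=
  ContDiff ℝ ∞ φ ∧ tsupport φ ⊆ Metric.closedBall 0 ε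

theorem IsTest.hcs {n : ℕ} {ε : ℝ} {φ : (Fin (2*n+1) → ℝ) → ℝ} (h : IsTest n ε φ) : 
    HasCompactSupport φ :=
  (isCompact_closedBall _ _).of_isClosed_subset (isClosed_tsupport _) h.2

theorem IsTest.mul {n : ℕ} {ε : ℝ} {φ g : (Fin (2*n+1) → ℝ) → ℝ} (h : IsTest n ε φ)
    (hg : ContDiff ℝ ∞ g) : IsTest n ε (fun z => φ z * g z) :=
  ⟨h.1.mul hg, (tsupport_mul_subset_left).trans h.2⟩

theorem hDeriv_contDiff {n : ℕ} (j : Fin (2*n)) {g : (Fin (2*n+1) → ℝ) → ℝ} 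
    (hg : ContDiff ℝ ∞ g) : ContDiff ℝ ∞ (hDeriv n j g) := by
  rw [← contDiffOn_univ] at hg ⊢
  exact hDeriv_contDiffOn isOpen_univ j hg

theorem IsTest.hDeriv {n : ℕ} {ε : ℝ} {φ : (Fin (2*n+1) → ℝ) → ℝ} (h : IsTest n ε φ)
    (j : Fin (2*n)) : IsTest n ε (hDeriv n j φ) := by
  refine ⟨hDeriv_contDiff j h.1, ?_⟩
  refine subset_trans ?_ ((tsupport_fderiv_subset ℝ (f := φ)).trans h.2)
  apply closure_mono
  intro x hx
  simp only [Function.mem_support, _root_.hDeriv] at hx ⊢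
  intro h0
  apply hx
  simp [h0]

theorem IsTest.add {n : ℕ} {ε : ℝ} {φ g : (Fin (2*n+1) → ℝ) → ℝ} (h : IsTest n ε φ)
    (hg : IsTest n ε g) : IsTest n ε (fun z => φ z + g z) := by
  refine ⟨h.1.add hg.1, (tsupport_add φ g).trans (Set.union_subset h.2 hg.2)⟩

/-- averaged function -/
def Gf (n : ℕ) (p : Fin (2*n+1) → ℝ) (φ u : (Fin (2*n+1) → ℝ) → ℝ) (r : ℝ) : ℝ :=
  ∫ z, φ z * u (hm n p r z)

theorem hm_contDiff (n : ℕ) (p : Fin (2*n+1) → ℝ) (r : ℝ) : ContDiff ℝ ∞ (hm n p r) :=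
  contDiff_const.add (hmL n p r).contDiff

theorem hm_continuous2 (n : ℕ) (p : Fin (2*n+1) → ℝ) :
    Continuous (fun q : ℝ × (Fin (2*n+1) → ℝ) => hm n p q.1 q.2) := by
  simp only [hm, hmL_apply]
  fun_prop

theorem Xvec_continuous (n : ℕ) (j : Fin (2*n)) : Continuous (Xvec n j) := 
  (Xvec_contDiff n j).continuous

theorem Gf_deriv1 {n : ℕ} {ε : ℝ} (p : Fin (2*n+1) → ℝ) {φ u : (Fin (2*n+1) → ℝ) → ℝ} 
    (hφ : IsTest n ε φ) (hu : ContDiff ℝ ∞ u) (r₀ : ℝ) :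
    HasDerivAt (Gf n p φ u) (∫ z, φ z * fderiv ℝ u (hm n p r₀ z) 
      (∑ j : Fin (2*n), z (Fin.castSucc j) • Xvec n j (hm n p r₀ z) +
      (r₀ * (2 * z (Fin.last (2*n)) - ∑ j : Fin (2*n), z (Fin.castSucc j) * yc n j z)) • eL n)) r₀ := by
  set F' : ℝ → (Fin (2*n+1) → ℝ) → ℝ := fun r z => φ z * fderiv ℝ u (hm n p r z) 
      (∑ j : Fin (2*n), z (Fin.castSucc j) • Xvec n j (hm n p r z) +
      (r * (2 * z (Fin.last (2*n)) - ∑ j : Fin (2*n), z (Fin.castSucc j) * yc n j z)) • eL n) with hF'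
  have hcont : Continuous (fun q : ℝ × (Fin (2*n+1) → ℝ) => F' q.1 q.2) := by
    simp only [hF']
    have h1 := hm_continuous2 n p
    have h2 := hφ.1.continuous
    have h3 := hu.continuous_fderiv (by simp)
    have h4 := fun j => Xvec_continuous n j
    have h5 : Continuous (fun q : ℝ × (Fin (2*n+1) → ℝ) => fderiv ℝ u (hm n p q.1 q.2)) := h3.comp h1
    have h6 : ∀ j, Continuous (fun q : ℝ × (Fin (2*n+1) → ℝ) => Xvec n j (hm n p q.1 q.2)) := 
      fun j => (h4 j).comp h1
    refine (h2.comp continuous_snd).mul (h5.clm_apply ?_)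
    refine Continuous.add (continuous_finsetSum _ fun j _ => Continuous.smul
      (f := fun q : ℝ × (Fin (2*n+1) → ℝ) => q.2 (Fin.castSucc j)) (by fun_prop) (h6 j)) ?_
    fun_prop
  obtain ⟨M, hM⟩ := ((isCompact_closedBall r₀ 1).prod hφ.hcs.isCompact).exists_bound_of_continuousOn 
    hcont.continuousOn
  refine (hasDerivAt_integral_of_dominated_loc_of_deriv_le (F := fun r z => φ z * u (hm n p r z))
    (F' := F') (bound := (tsupport φ).indicator fun _ => M) (Metric.closedBall_mem_nhds r₀ one_pos)
    ?_ ?_ ?_ ?_ ?_ ?_).2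
  · exact Filter.Eventually.of_forall fun r => (hφ.1.continuous.mul 
      (hu.continuous.comp (hm_contDiff n p r).continuous)).aestronglyMeasurable
  · exact (hφ.1.continuous.mul (hu.continuous.comp 
      (hm_contDiff n p r₀).continuous)).integrable_of_hasCompactSupport hφ.hcs.mul_right
  · exact (hcont.comp (by fun_prop : Continuous fun z : Fin (2*n+1) → ℝ => (r₀, z))).aestronglyMeasurable
  · refine Filter.Eventually.of_forall fun z r hr => ?_
    by_cases hz : z ∈ tsupport φ
    · rw [Set.indicator_of_mem hz]
      exact hM (r, z) ⟨hr, hz⟩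
    · rw [Set.indicator_of_notMem hz]
      simp [hF', image_eq_zero_of_notMem_tsupport hz]
  · rw [integrable_indicator_iff hφ.hcs.isCompact.measurableSet]
    exact integrableOn_const hφ.hcs.isCompact.measure_lt_top.ne
  · refine Filter.Eventually.of_forall fun z r _ => ?_
    have h2 : HasFDerivAt u (fderiv ℝ u (hm n p r z)) (hm n p r z) :=
      (hu.differentiable (by simp) _).hasFDerivAt
    exact (h2.comp_hasDerivAt r (hm_hasDerivAt n p z r)).const_mul (φ z)


theorem Gf_integrable {n : ℕ} {ε : ℝ} (p : Fin (2*n+1) → ℝ) {φ u : (Fin (2*n+1) → ℝ) → ℝ} 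
    (hφ : IsTest n ε φ) (hu : ContDiff ℝ ∞ u) (r : ℝ) :
    Integrable (fun z => φ z * u (hm n p r z)) :=
  (hφ.1.continuous.mul (hu.continuous.comp 
      (hm_contDiff n p r).continuous)).integrable_of_hasCompactSupport hφ.hcs.mul_right

theorem Gf_step {n : ℕ} (hn : 1 ≤ n) {ε : ℝ} {φ : (Fin (2*n+1) → ℝ) → ℝ} (hφ : IsTest n ε φ) :
    ∃ Φ : Fin (2*n) → (Fin (2*n+1) → ℝ) → ℝ, (∀ j, IsTest n ε (Φ j)) ∧
      ∀ u, ContDiff ℝ ∞ u → ∀ p r, HasDerivAt (Gf n p φ u) 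
        (∑ j, Gf n p (Φ j) (hDeriv n j u) r) r := by
  set m : (Fin (2*n+1) → ℝ) → ℝ := fun z => 
    2 * z (Fin.last (2*n)) - ∑ j : Fin (2*n), z (Fin.castSucc j) * yc n j z with hm'
  have hmc : ContDiff ℝ ∞ m := by
    have := fun j => (yc n j).contDiff (n := ∞)
    simp only [hm']
    fun_prop
  set ψ : (Fin (2*n+1) → ℝ) → ℝ := fun z => φ z * m z with hψ'
  have hψ : IsTest n ε ψ := hφ.mul hmc
  set i0 : Fin (2*n) := ⟨0, by omega⟩ with hi0
  set i1 : Fin (2*n) := ⟨n, by omega⟩ with hi1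
  have t1 : ∀ j : Fin (2*n), IsTest n ε (fun z => φ z * z (Fin.castSucc j)) := 
    fun j => hφ.mul (by fun_prop)
  have t2 := hψ.hDeriv i1
  have t3 := hψ.hDeriv i0
  refine ⟨fun j z => (φ z * z (Fin.castSucc j) + hDeriv n i1 ψ z * (if j = i0 then -1 else 0)) +
    hDeriv n i0 ψ z * (if j = i1 then 1 else 0), fun j => ((t1 j).add 
      (t2.mul contDiff_const)).add (t3.mul contDiff_const), ?_⟩
  intro u hu p r
  have hX := fun j => hDeriv_contDiff j hu
  convert Gf_deriv1 p hφ hu r using 1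
  have e1 : ∀ z, φ z * fderiv ℝ u (hm n p r z) 
      (∑ j : Fin (2*n), z (Fin.castSucc j) • Xvec n j (hm n p r z) +
      (r * (2 * z (Fin.last (2*n)) - ∑ j : Fin (2*n), z (Fin.castSucc j) * yc n j z)) • eL n) =
      ∑ j : Fin (2*n), (φ z * z (Fin.castSucc j)) * hDeriv n j u (hm n p r z) + 
      (ψ z * hDeriv n i1 (fun z => hDeriv n i0 u (hm n p r z)) z - 
        ψ z * hDeriv n i0 (fun z => hDeriv n i1 u (hm n p r z)) z) := by
    intro z
    rw [hDeriv_comp_hm _ _ _ _ (hX i0), hDeriv_comp_hm _ _ _ _ (hX i1), map_add, map_sum, map_smul,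
      hcommutator hn _ hu, mul_add, Finset.mul_sum]
    congr 1
    · refine Finset.sum_congr rfl fun j _ => ?_
      rw [map_smul, smul_eq_mul, ← mul_assoc]; rfl
    · simp only [hψ', hm', smul_eq_mul]
      ring
  simp only [e1]
  have hcomp : ∀ j, ContDiff ℝ ∞ (fun z => hDeriv n j u (hm n p r z)) := 
    fun j => (hX j).comp (hm_contDiff n p r)
  have i1' : ∀ i j, Integrable (fun z => ψ z * hDeriv n i (fun z => hDeriv n j u (hm n p r z)) z) := by
    intro i j
    exact (hψ.1.continuous.mul 
      (hDeriv_contDiff i (hcomp j)).continuous).integrable_of_hasCompactSupport hψ.hcs.mul_right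
  have hsb : Integrable (fun z => ψ z * hDeriv n i1 (fun z => hDeriv n i0 u (hm n p r z)) z - 
      ψ z * hDeriv n i0 (fun z => hDeriv n i1 u (hm n p r z)) z) := (i1' _ _).sub (i1' _ _)
  rw [integral_add (integrable_finsetSum _ fun j _ => Gf_integrable p (t1 j) (hX j) r) hsb, integral_sub (i1' _ _) (i1' _ _), 
    integral_finsetSum _ fun j _ => Gf_integrable p (t1 j) (hX j) r,
    hDeriv_ibp _ hψ.1 hψ.hcs (hcomp _), hDeriv_ibp _ hψ.1 hψ.hcs (hcomp _)]
  have e2 : ∀ j : Fin (2*n), Gf n p (fun z => (φ z * z (Fin.castSucc j) + 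
      hDeriv n i1 ψ z * (if j = i0 then -1 else 0)) +
      hDeriv n i0 ψ z * (if j = i1 then 1 else 0)) (hDeriv n j u) r = 
      (∫ z, (φ z * z (Fin.castSucc j)) * hDeriv n j u (hm n p r z)) + 
      (if j = i0 then -∫ z, hDeriv n i1 ψ z * hDeriv n j u (hm n p r z) else 0) + 
      (if j = i1 then ∫ z, hDeriv n i0 ψ z * hDeriv n j u (hm n p r z) else 0) := by
    intro j
    unfold Gf
    have a1 := Gf_integrable p (t1 j) (hX j) r
    have a2 := Gf_integrable p t2 (hX j) r
    have a3 := Gf_integrable p t3 (hX j) r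
    have e3 : ∀ z : Fin (2*n+1) → ℝ, ((φ z * z (Fin.castSucc j) + 
      hDeriv n i1 ψ z * (if j = i0 then -1 else 0)) +
      hDeriv n i0 ψ z * (if j = i1 then 1 else 0)) * hDeriv n j u (hm n p r z) = 
      φ z * z (Fin.castSucc j) * hDeriv n j u (hm n p r z) + 
       (if j = i0 then -1 else 0) * (hDeriv n i1 ψ z * hDeriv n j u (hm n p r z)) +
       (if j = i1 then 1 else 0) * (hDeriv n i0 ψ z * hDeriv n j u (hm n p r z)) := by
      intro z; ring
    simp only [e3]
    have a4 : Integrable (fun z : Fin (2*n+1) → ℝ => 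
      φ z * z (Fin.castSucc j) * hDeriv n j u (hm n p r z) + 
       (if j = i0 then -1 else 0) * (hDeriv n i1 ψ z * hDeriv n j u (hm n p r z))) := 
      a1.add (a2.const_mul _)
    rw [integral_add a4 (a3.const_mul _), integral_add a1 (a2.const_mul _),
      integral_const_mul, integral_const_mul]
    congr 2
    · split_ifs <;> ring
    · split_ifs <;> ring
  simp only [e2, Finset.sum_add_distrib, Finset.sum_ite_eq', Finset.mem_univ, if_true]
  ring

theorem hmL_det (n : ℕ) (p : Fin (2*n+1) → ℝ) (r : ℝ) :
    LinearMap.det (hmL n p r : (Fin (2*n+1) → ℝ) →ₗ[ℝ] (Fin (2*n+1) → ℝ)) = r ^ (2*n+2) := by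
  rw [← LinearMap.det_toMatrix']
  have hent : ∀ i j, LinearMap.toMatrix' (hmL n p r : (Fin (2*n+1) → ℝ) →ₗ[ℝ] (Fin (2*n+1) → ℝ)) i j
      = hmL n p r (Pi.single j 1) i := by
    intro i j
    rw [LinearMap.toMatrix'_apply]
    rfl
  rw [Matrix.det_of_isLowerTriangular, Fin.prod_univ_castSucc]
  · simp only [hent, hmL_apply]
    simp [eL_castSucc, eL_last]
    ring
  · intro i j hij
    rw [hent, hmL_apply]
    have hij : i < j := hij
    have : i ≠ Fin.last (2*n) := (lt_of_lt_of_le hij (Fin.le_last j)).ne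
    obtain ⟨k, rfl⟩ := Fin.exists_castSucc_eq.2 this
    simp [eL_castSucc, hij.ne]

theorem hm_map (n : ℕ) (p : Fin (2*n+1) → ℝ) {r : ℝ} (hr : 0 < r) :
    Measure.map (hm n p r) volume = ENNReal.ofReal ((r ^ (2*n+2))⁻¹) • volume := by
  have h1 : hm n p r = (fun z => p + z) ∘ (hmL n p r) := rfl
  have hdet := hmL_det n p r
  have h2 := Measure.map_linearMap_addHaar_eq_smul_addHaar (μ := (volume : Measure (Fin (2*n+1) → ℝ)))
    (f := (hmL n p r : (Fin (2*n+1) → ℝ) →ₗ[ℝ] (Fin (2*n+1) → ℝ))) (by rw [hdet]; positivity)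
  rw [hdet, abs_of_pos (by positivity)] at h2
  have h3 : Measure.map (hmL n p r) volume = ENNReal.ofReal ((r ^ (2*n+2))⁻¹) • volume := h2
  rw [h1, ← Measure.map_map (by fun_prop) (hmL n p r).continuous.measurable, h3,
    Measure.map_smul, map_add_left_eq_self]

theorem Gf_L2 {n : ℕ} {ε : ℝ} {φ : (Fin (2*n+1) → ℝ) → ℝ} (hφ : IsTest n ε φ)
    {D : Set (Fin (2*n+1) → ℝ)} (hD : IsOpen D) :
    ∃ C : ℝ, 0 ≤ C ∧ ∀ u, ContDiff ℝ ∞ u → ∀ p r, 0 < r → 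
      (∀ z ∈ Metric.closedBall 0 ε, hm n p r z ∈ D) → 
      ∀ b, 0 ≤ b → eLpNorm u 2 (volume.restrict D) ≤ ENNReal.ofReal b → 
      |Gf n p φ u r| ≤ C * b * (r ^ (n+1))⁻¹ := by
  obtain ⟨M, hM⟩ := hφ.hcs.exists_bound_of_continuous hφ.1.continuous
  set B : Set (Fin (2*n+1) → ℝ) := Metric.closedBall 0 ε with hB
  have hM0 : 0 ≤ M := (norm_nonneg _).trans (hM 0)
  have hBfin : volume B ≠ ⊤ := (isCompact_closedBall _ _).measure_lt_top.ne
  refine ⟨M * (volume B ^ (1/2:ℝ)).toReal, by positivity, ?_⟩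
  intro u hu p r hr hin b hb hub
  have hvc : Continuous (fun z => u (hm n p r z)) := hu.continuous.comp (hm_contDiff n p r).continuous
  have hmm : Measurable (hm n p r) := (hm_contDiff n p r).continuous.measurable
  have e1 : ‖Gf n p φ u r‖ₑ ≤ ENNReal.ofReal M * eLpNorm (fun z => u (hm n p r z)) 1 (volume.restrict B) := by
    unfold Gf
    refine (enorm_integral_le_lintegral_enorm _).trans ?_
    rw [eLpNorm_one_eq_lintegral_enorm, ← lintegral_const_mul' _ _ ENNReal.ofReal_ne_top,
      ← lintegral_indicator Metric.isClosed_closedBall.measurableSet]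
    apply lintegral_mono
    intro z
    by_cases hz : z ∈ B
    · beta_reduce
      rw [Set.indicator_of_mem hz, enorm_mul]
      gcongr
      rw [← ofReal_norm]
      exact ENNReal.ofReal_le_ofReal (hM z)
    · have : φ z = 0 := image_eq_zero_of_notMem_tsupport (fun h => hz (hφ.2 h))
      simp [this]
  have e2 : eLpNorm (fun z => u (hm n p r z)) 1 (volume.restrict B) ≤ 
      eLpNorm (fun z => u (hm n p r z)) 2 (volume.restrict B) * volume B ^ (1/2:ℝ) := by
    have := eLpNorm_le_eLpNorm_mul_rpow_measure_univ (μ := volume.restrict B) (p := 1) (q := 2) 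
      (f := fun z => u (hm n p r z)) (by norm_num) hvc.aestronglyMeasurable
    simp only [Measure.restrict_apply_univ] at this
    convert this using 3
    norm_num
  have e3 : eLpNorm (fun z => u (hm n p r z)) 2 (volume.restrict B) ≤ 
      ENNReal.ofReal ((r ^ (n+1))⁻¹) * ENNReal.ofReal b := by
    have hsub : B ⊆ hm n p r ⁻¹' D := fun z hz => hin z hz
    refine (eLpNorm_mono_measure _ (Measure.restrict_mono hsub le_rfl)).trans ?_
    have h1 := eLpNorm_map_measure (p := 2) (μ := volume.restrict (hm n p r ⁻¹' D)) (f := hm n p r) (g := u)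
      hu.continuous.aestronglyMeasurable hmm.aemeasurable
    have h2 : eLpNorm (fun z => u (hm n p r z)) 2 (volume.restrict (hm n p r ⁻¹' D)) = 
      eLpNorm u 2 (Measure.map (hm n p r) (volume.restrict (hm n p r ⁻¹' D))) := h1.symm
    rw [h2, ← Measure.restrict_map hmm hD.measurableSet, hm_map n p hr, Measure.restrict_smul,
      eLpNorm_smul_measure_of_ne_top (by norm_num), smul_eq_mul]
    gcongr
    rw [ENNReal.ofReal_rpow_of_nonneg (by positivity) (by positivity)]
    apply ENNReal.ofReal_le_ofReal
    apply le_of_eq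
    have : (r ^ (2*n+2))⁻¹ = ((r ^ (n+1))⁻¹) ^ (2:ℕ) := by
      rw [inv_pow, ← pow_mul]; congr 2; ring
    rw [this]
    simp only [one_div, ENNReal.toReal_inv, ENNReal.toReal_ofNat]
    exact Real.pow_rpow_inv_natCast (by positivity) (by norm_num)
  have e4 : ‖Gf n p φ u r‖ₑ ≤ ENNReal.ofReal (M * (volume B ^ (1/2:ℝ)).toReal * b * (r ^ (n+1))⁻¹) := by
    have hfin : volume B ^ (1/2:ℝ) ≠ ⊤ := ENNReal.rpow_ne_top_of_nonneg (by norm_num) hBfin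
    calc _ ≤ _ := e1
      _ ≤ ENNReal.ofReal M * ((ENNReal.ofReal ((r ^ (n+1))⁻¹) * ENNReal.ofReal b) * volume B ^ (1/2:ℝ)) := by
        gcongr
        exact e2.trans (by gcongr)
      _ = _ := by
        rw [ENNReal.ofReal_mul (by positivity), ENNReal.ofReal_mul (by positivity), 
          ENNReal.ofReal_mul (by positivity), ENNReal.ofReal_toReal hfin]
        ring
  rw [← ofReal_norm, ENNReal.ofReal_le_ofReal_iff (by positivity)] at e4
  exact e4


/-- weights -/
def wt : ℕ → ℝ → ℝ
  | 0, _ => 1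
  | m+1, r => r ^ (-((m:ℝ) + 1/2))

theorem wt_one (m : ℕ) : wt m 1 = 1 := by
  cases m <;> simp [wt]

theorem wt_calc (m : ℕ) {g g' : ℝ → ℝ} {K : ℝ} (hK : 0 ≤ K) (hg : ∀ r, HasDerivAt g (g' r) r)
    (hb : ∀ r, 0 < r → r ≤ 1 → |g' r| ≤ K * wt (m+1) r) (h1 : |g 1| ≤ K) :
    ∀ r, 0 < r → r ≤ 1 → |g r| ≤ 3 * K * wt m r := by
  intro r hr hr1
  set a : ℝ := 1/2 - m with ha
  have ha0 : a ≠ 0 := by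
    intro h
    have : (2 * m : ℝ) = 1 := by linarith
    have : 2 * m = 1 := by exact_mod_cast this
    omega
  set h : ℝ → ℝ := fun ρ => K * (ρ ^ a / a) with hh
  have hh' : ∀ ρ, 0 < ρ → HasDerivAt h (K * wt (m+1) ρ) ρ := by
    intro ρ hρ
    have := ((Real.hasDerivAt_rpow_const (x := ρ) (p := a) (Or.inl hρ.ne')).div_const a).const_mul K
    have e : a - 1 = -((m:ℝ) + 1/2) := by rw [ha]; ring
    have e' : K * wt (m+1) ρ = K * (a * ρ ^ (a-1) / a) := by
      rw [e]
      simp only [wt]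
      field_simp
    rw [e']
    exact this
  have hmon : ∀ σ : ℝ, |σ| = 1 → h r + σ * g r ≤ h 1 + σ * g 1 := by
    intro σ hσ
    have hd : ∀ x ∈ Set.Icc r 1, HasDerivAt (fun x => h x + σ * g x) (K * wt (m+1) x + σ * g' x) x :=
      fun x hx => (hh' x (lt_of_lt_of_le hr hx.1)).add ((hg x).const_mul σ)
    have : MonotoneOn (fun x => h x + σ * g x) (Set.Icc r 1) := by
      apply monotoneOn_of_deriv_nonneg (convex_Icc r 1)
      · exact fun x hx => (hd x hx).continuousAt.continuousWithinAt
      · exact fun x hx => (hd x (interior_subset hx)).differentiableAt.differentiableWithinAt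
      · intro x hx
        have hx := interior_subset hx
        rw [(hd x hx).deriv]
        have h2 := hb x (lt_of_lt_of_le hr hx.1) hx.2
        have h3 : |σ * g' x| ≤ K * wt (m+1) x := by rw [abs_mul, hσ, one_mul]; exact h2
        linarith [(abs_le.1 h3).1]
    exact this ⟨le_rfl, hr1⟩ ⟨hr1, le_rfl⟩ hr1
  have hp := hmon 1 (by simp)
  have hm := hmon (-1) (by simp)
  have hbound : K + (h 1 - h r) ≤ 3 * K * wt m r := by
    simp only [hh, Real.one_rpow]
    cases m with
    | zero =>
      have ha' : a = 1/2 := by rw [ha]; simp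
      have := Real.rpow_nonneg hr.le a
      have h4 : (0:ℝ) ≤ r ^ a / a := div_nonneg this (by rw [ha']; norm_num)
      have h5 : 1 / a = 2 := by rw [ha']; norm_num
      rw [h5]
      simp only [wt]
      nlinarith
    | succ m =>
      have ha' : a = -((m:ℝ) + 1/2) := by rw [ha]; push_cast; ring
      simp only [wt]
      rw [← ha']
      have h6 : 1 ≤ r ^ a := Real.one_le_rpow_of_pos_of_le_one_of_nonpos hr hr1 (by rw [ha']; 
                                                                                    have := Nat.cast_nonneg (α := ℝ) m
                                                                                    linarith)
      set c := (m:ℝ) + 1/2 with hc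
      have hc' : 1/2 ≤ c := by have := Nat.cast_nonneg (α := ℝ) m; linarith
      have h7 : 1 / c ≤ 2 := by rw [div_le_iff₀ (by linarith)]; linarith
      have h8 : 0 ≤ 1 / c := by positivity
      have e : K * (1 / a) - K * (r ^ a / a) = K * ((r ^ a - 1) * (1 / c)) := by
        have e1 : 1/a = -(1/c) := by rw [ha', one_div_neg_eq_neg_one_div]
        rw [div_eq_mul_one_div (r ^ a) a, e1]
        ring
      rw [e]
      have h9 : (r ^ a - 1) * (1 / c) ≤ (r ^ a - 1) * 2 := by gcongr
      have h10 := mul_le_mul_of_nonneg_left h9 hK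
      nlinarith
  obtain ⟨q1, q2⟩ := abs_le.1 h1
  rw [abs_le]
  constructor <;> linarith

theorem sob_aux {n : ℕ} (hn : 1 ≤ n) (ε : ℝ) {D : Set (Fin (2*n+1) → ℝ)} (hD : IsOpen D) (m : ℕ) 
    (hmn : m ≤ n + 2) : ∀ φ, IsTest n ε φ → ∃ C : ℝ, 0 ≤ C ∧ ∀ u, ContDiff ℝ ∞ u → ∀ p, 
      (∀ r : ℝ, 0 < r → r ≤ 1 → ∀ z ∈ Metric.closedBall 0 ε, hm n p r z ∈ D) → 
      ∀ b, 0 ≤ b → 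
      (∀ I : List (Fin (2*n)), I.length ≤ m → 
        eLpNorm (XI n I u) 2 (volume.restrict D) ≤ ENNReal.ofReal b) → 
      ∀ r : ℝ, 0 < r → r ≤ 1 → |Gf n p φ u r| ≤ C * b * wt (n + 2 - m) r := by
  induction m with
  | zero =>
    intro φ hφ
    obtain ⟨C, hC, H⟩ := Gf_L2 hφ hD
    refine ⟨C, hC, fun u hu p hp b hb hI r hr hr1 => ?_⟩
    refine (H u hu p r hr (hp r hr hr1) b hb (hI [] (by simp))).trans ?_
    gcongr
    simp only [Nat.sub_zero, wt]
    rw [← Real.rpow_natCast, ← Real.rpow_neg hr.le]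
    apply Real.rpow_le_rpow_of_exponent_ge hr hr1
    push_cast
    linarith
  | succ m ih =>
    intro φ hφ
    have ih := ih (by omega)
    obtain ⟨Φ, hΦ, hder⟩ := Gf_step hn hφ
    obtain ⟨C', hC', H'⟩ := ih φ hφ
    choose C hC H using fun j => ih (Φ j) (hΦ j)
    have hS : 0 ≤ ∑ j, C j := Finset.sum_nonneg fun j _ => hC j
    refine ⟨3 * ((∑ j, C j) + C'), by positivity, fun u hu p hp b hb hI r hr hr1 => ?_⟩
    have hk : n + 2 - m = (n + 2 - (m+1)) + 1 := by omega
    have key := wt_calc (n + 2 - (m+1)) (g := Gf n p φ u) (K := ((∑ j, C j) + C') * b) (by positivity)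
      (fun r => hder u hu p r) ?_ ?_ r hr hr1
    · calc _ ≤ _ := key
        _ = _ := by ring
    · intro ρ hρ hρ1
      rw [← hk]
      have hw : 0 ≤ wt (n + 2 - m) ρ := by
        rw [hk]; exact Real.rpow_nonneg hρ.le _
      calc |∑ j, Gf n p (Φ j) (hDeriv n j u) ρ| ≤ ∑ j, |Gf n p (Φ j) (hDeriv n j u) ρ| := 
            Finset.abs_sum_le_sum_abs _ _
        _ ≤ ∑ j, C j * b * wt (n + 2 - m) ρ := by
            refine Finset.sum_le_sum fun j _ => ?_
            refine H j _ (hDeriv_contDiff j hu) p hp b hb (fun I hIm => ?_) ρ hρ hρ1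
            have := hI (I ++ [j]) (by simp; omega)
            rwa [XI_append] at this
        _ = (∑ j, C j) * b * wt (n + 2 - m) ρ := by rw [Finset.sum_mul, Finset.sum_mul]
        _ ≤ _ := by
          gcongr
          linarith
    · have := H' u hu p hp b hb (fun I hIm => hI I (by omega)) 1 one_pos le_rfl
      rw [wt_one, mul_one] at this
      refine this.trans ?_
      gcongr
      linarith

theorem exists_eps {n : ℕ} {K D : Set (Fin (2*n+1) → ℝ)} (hK : IsCompact K) (hD : IsOpen D) 
    (hKD : K ⊆ D) : ∃ ε > 0, ∀ p ∈ K, ∀ r, 0 ≤ r → r ≤ 1 → ∀ z ∈ Metric.closedBall 0 ε, 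
      hm n p r z ∈ D := by
  have hc : Continuous (fun q : ((Fin (2*n+1) → ℝ) × ℝ) × (Fin (2*n+1) → ℝ) => 
      hm n q.1.1 q.1.2 q.2) := by
    simp only [hm, hmL_apply]
    fun_prop
  have h0 : ∀ p r, hm n p r 0 = p := by intro p r; simp [hm]
  obtain ⟨U, V, hU, hV, hKU, h0V, hUV⟩ := generalized_tube_lemma (hK.prod (isCompact_Icc (a := (0:ℝ)) (b := 1)))
    (isCompact_singleton (x := (0 : Fin (2*n+1) → ℝ))) (hD.preimage hc) (by
      rintro ⟨⟨p, r⟩, z⟩ ⟨⟨hp, hr⟩, hz⟩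
      simp only [Set.mem_singleton_iff] at hz
      subst hz
      simp only [Set.mem_preimage, h0]
      exact hKD hp)
  obtain ⟨ε, hε, hb⟩ := Metric.nhds_basis_closedBall.mem_iff.1 (hV.mem_nhds (h0V rfl))
  exact ⟨ε, hε, fun p hp r hr hr1 z hz => hUV (a := ((p, r), z)) ⟨hKU ⟨hp, hr, hr1⟩, hb hz⟩⟩

theorem sob_global {n : ℕ} (hn : 1 ≤ n) {K D : Set (Fin (2*n+1) → ℝ)} (hK : IsCompact K) (hD : IsOpen D) 
    (hKD : K ⊆ D) : ∃ C : ℝ, 0 ≤ C ∧ ∀ u, ContDiff ℝ ∞ u → ∀ b, 0 ≤ b → 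
      (∀ I : List (Fin (2*n)), I.length ≤ n + 2 → 
        eLpNorm (XI n I u) 2 (volume.restrict D) ≤ ENNReal.ofReal b) → 
      ∀ p ∈ K, |u p| ≤ C * b := by
  obtain ⟨ε, hε, hin⟩ := exists_eps hK hD hKD
  let f : ContDiffBump (0 : Fin (2*n+1) → ℝ) := ⟨ε/2, ε, by linarith, by linarith⟩
  have hφ : IsTest n ε (f.normed volume) := ⟨f.contDiff_normed, by rw [f.tsupport_normed_eq]⟩
  obtain ⟨C, hC, H⟩ := sob_aux hn ε hD (n+2) le_rfl _ hφ
  refine ⟨C, hC, fun u hu b hb hI p hp => ?_⟩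
  have H := H u hu p (fun r hr hr1 => hin p hp r hr.le hr1) b hb hI
  simp only [Nat.sub_self, wt, mul_one] at H
  obtain ⟨_, _, hder⟩ := Gf_step hn hφ
  have hcont : Continuous (Gf n p (f.normed volume) u) := 
    continuous_iff_continuousAt.2 fun r => (hder u hu p r).continuousAt
  have h0 : Gf n p (f.normed volume) u 0 = u p := by
    unfold Gf
    have : ∀ z, hm n p 0 z = p := by intro z; simp [hm, hmL_apply]
    simp only [this]
    rw [integral_mul_const, f.integral_normed, one_mul]
  rw [← h0]
  have hlim : Filter.Tendsto (fun r => |Gf n p (f.normed volume) u r|) (nhdsWithin 0 (Set.Ioi 0)) 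
      (nhds |Gf n p (f.normed volume) u 0|) := (hcont.abs.tendsto 0).mono_left nhdsWithin_le_nhds
  refine le_of_tendsto hlim ?_
  filter_upwards [Ioc_mem_nhdsGT (zero_lt_one' ℝ)] with r hr
  exact H r hr.1 hr.2

open scoped Manifold in
theorem sobolev {n : ℕ} (hn : 1 ≤ n) {K D : Set (Fin (2*n+1) → ℝ)} (hK : IsCompact K) (hD : IsOpen D) 
    (hKD : K ⊆ D) : ∃ C : ℝ, 0 ≤ C ∧ ∀ u, ContDiffOn ℝ ∞ u D → ∀ b, 0 ≤ b → 
      (∀ I : List (Fin (2*n)), I.length ≤ n + 2 → 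
        eLpNorm (XI n I u) 2 (volume.restrict D) ≤ ENNReal.ofReal b) → 
      ∀ p ∈ K, |u p| ≤ C * b := by
  obtain ⟨L, hL, hKL, hLD⟩ := exists_compact_between hK hD hKD
  obtain ⟨C, hC, H⟩ := sob_global hn hK isOpen_interior hKL
  obtain ⟨χ, h0, h1, -⟩ := exists_contMDiffMap_zero_one_nhds_of_isClosed (n := ⊤)
    (𝓘(ℝ, Fin (2*n+1) → ℝ)) hD.isClosed_compl hL.isClosed 
    (Set.disjoint_left.2 fun x hx hx' => hx (hLD hx'))
  have hχ : ContDiff ℝ ∞ χ := χ.contMDiff.contDiff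
  refine ⟨C, hC, fun u hu b hb hI p hp => ?_⟩
  have hsm : ContDiff ℝ ∞ (fun x => χ x * u x) := by
    rw [contDiff_iff_contDiffAt]
    intro x
    by_cases hx : x ∈ D
    · exact hχ.contDiffAt.mul (hu.contDiffAt (hD.mem_nhds hx))
    · have := (h0.filter_mono (nhds_le_nhdsSet (show x ∈ Dᶜ from hx)))
      refine (contDiffAt_const (c := (0:ℝ))).congr_of_eventuallyEq ?_
      filter_upwards [this] with y hy
      rw [hy, zero_mul]
  have heq : Set.EqOn (fun x => χ x * u x) u (interior L) := by
    intro x hx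
    have : χ x = 1 := h1.self_of_nhdsSet x (interior_subset hx)
    simp [this]
  have := H _ hsm b hb (fun I hIl => ?_) p hp
  · have e := heq (hKL hp)
    simp only at e
    rw [e] at this
    exact this
  · rw [eLpNorm_congr_ae (g := XI n I u)]
    · exact (eLpNorm_mono_measure _ (Measure.restrict_mono (interior_subset.trans hLD) le_rfl)).trans 
        (hI I hIl)
    · exact (ae_restrict_iff' isOpen_interior.measurableSet).2 (Filter.Eventually.of_forall 
        fun x hx => XI_congr isOpen_interior I heq hx)


/-- local extension property up to the boundary -/
def LocExt (n : ℕ) (D : Set (Fin (2*n+1) → ℝ)) (k : ℕ) (g : (Fin (2*n+1) → ℝ) → ℝ) : Prop :=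
  ∀ x ∈ closure D, ∃ h : (Fin (2*n+1) → ℝ) → ℝ, ContDiffWithinAt ℝ k h (closure D) x ∧
    ∀ᶠ y in nhdsWithin x D, g y = h y

theorem Ext_step {n : ℕ} {D : Set (Fin (2*n+1) → ℝ)} (hD : IsOpen D) {k : ℕ}
    {g : (Fin (2*n+1) → ℝ) → ℝ} (hg : LocExt n D (k+1) g) (j : Fin (2*n)) : LocExt n D k (hDeriv n j g) := by
  intro x hx
  obtain ⟨h, hh, he⟩ := hg x hx
  have hh' : ContDiffWithinAt ℝ ((k:ℕ∞) + 1 : WithTop ℕ∞) h (closure D) x := by exact_mod_cast hh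
  rw [contDiffWithinAt_succ_iff_hasFDerivWithinAt (by simp)] at hh'
  obtain ⟨u, hu, -, f', hf', hc⟩ := hh'
  rw [Set.insert_eq_of_mem hx] at hu
  refine ⟨fun y => f' y (Xvec n j y), ?_, ?_⟩
  · have h1 : ContDiffWithinAt ℝ k f' (closure D) x := by
      have := hc.mono_of_mem_nhdsWithin hu
      exact_mod_cast this
    exact h1.clm_apply ((Xvec_contDiff n j).of_le (by exact_mod_cast le_top)).contDiffWithinAt
  · have hu' : ∀ᶠ y in nhdsWithin x D, y ∈ u := nhdsWithin_mono x subset_closure hu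
    filter_upwards [eventually_eventually_nhdsWithin.2 he, eventually_eventually_nhdsWithin.2 hu',
      self_mem_nhdsWithin] with y h1 h2 hy
    rw [hD.nhdsWithin_eq hy] at h1 h2
    have h3 : HasFDerivAt h (f' y) y := (hf' y h2.self_of_nhds).hasFDerivAt h2
    unfold hDeriv
    rw [Filter.EventuallyEq.fderiv_eq h1, h3.fderiv]

theorem Ext_XI {n : ℕ} {D : Set (Fin (2*n+1) → ℝ)} (hD : IsOpen D)
    {f : (Fin (2*n+1) → ℝ) → ℝ} (hf : ContDiffOn ℝ ∞ f (closure D)) (I : List (Fin (2*n))) :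
    ∀ k, LocExt n D k (XI n I f) := by
  induction I with
  | nil => exact fun k x hx => ⟨f, (hf x hx).of_le (by exact_mod_cast le_top), Filter.Eventually.of_forall fun _ => rfl⟩
  | cons j I ih => exact fun k => Ext_step hD (ih (k+1)) j

theorem XI_bounded {n : ℕ} {D : Set (Fin (2*n+1) → ℝ)} (hD : IsOpen D) (hDb : IsBounded D)
    {f : (Fin (2*n+1) → ℝ) → ℝ} (hf : ContDiffOn ℝ ∞ f (closure D)) (I : List (Fin (2*n))) :
    ∃ M : ℝ, ∀ x ∈ D, |XI n I f x| ≤ M := by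
  have hK : IsCompact (closure D) := hDb.isCompact_closure
  have := hK.induction_on (p := fun S => ∃ M : ℝ, ∀ x ∈ S ∩ D, |XI n I f x| ≤ M)
    ⟨0, by simp⟩ (fun s t hst ⟨M, hM⟩ => ⟨M, fun x hx => hM x ⟨hst hx.1, hx.2⟩⟩)
    (fun s t ⟨M, hM⟩ ⟨N, hN⟩ => ⟨max M N, fun x hx => hx.1.elim
      (fun h => (hM x ⟨h, hx.2⟩).trans (le_max_left _ _))
      (fun h => (hN x ⟨h, hx.2⟩).trans (le_max_right _ _))⟩) ?_
  · obtain ⟨M, hM⟩ := this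
    exact ⟨M, fun x hx => hM x ⟨subset_closure hx, hx⟩⟩
  · intro x hx
    obtain ⟨h, hh, he⟩ := Ext_XI hD hf I 0 x hx
    have hb : ∀ᶠ y in nhdsWithin x (closure D), |h y| < |h x| + 1 :=
      hh.continuousWithinAt.abs.eventually_lt continuousWithinAt_const (by linarith)
    have he' : ∀ᶠ y in nhdsWithin x (closure D), y ∈ D → XI n I f y = h y := by
      rw [eventually_nhdsWithin_iff] at he ⊢
      filter_upwards [he] with y hy _ using hy
    exact ⟨_, hb.and he', |h x| + 1, fun y hy => by 
      rw [hy.1.2 hy.2]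
      exact hy.1.1.le⟩

theorem XI_memLp {n : ℕ} {D : Set (Fin (2*n+1) → ℝ)} (hD : IsOpen D) (hDb : IsBounded D)
    {f : (Fin (2*n+1) → ℝ) → ℝ} (hf : ContDiffOn ℝ ∞ f (closure D)) (I : List (Fin (2*n))) :
    MemLp (XI n I f) 2 (volume.restrict D) := by
  obtain ⟨M, hM⟩ := XI_bounded hD hDb hf I
  have : IsFiniteMeasure (volume.restrict D) := ⟨by
    rw [Measure.restrict_apply_univ]; exact hDb.measure_lt_top⟩
  refine MemLp.of_bound ((XI_contDiffOn hD I (hf.mono subset_closure)).continuousOn.aestronglyMeasurable 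
    hD.measurableSet) M ?_
  exact (ae_restrict_iff' hD.measurableSet).2 (Filter.Eventually.of_forall hM)

theorem fsNormSq_nonneg' {n : ℕ} (D : Set (Fin (2*n+1) → ℝ)) (s : ℕ) (f : (Fin (2*n+1) → ℝ) → ℝ) :
    0 ≤ fsNormSq n D s f :=
  Finset.sum_nonneg fun _ _ => Finset.sum_nonneg fun _ _ => integral_nonneg fun _ => by positivity

theorem eLp_le_fsNorm {n : ℕ} {D : Set (Fin (2*n+1) → ℝ)} (hD : IsOpen D) (hDb : IsBounded D) {s : ℕ}
    {f : (Fin (2*n+1) → ℝ) → ℝ} (hf : ContDiffOn ℝ ∞ f (closure D)) (I : List (Fin (2*n))) 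
    (hI : I.length ≤ s) :
    eLpNorm (XI n I f) 2 (volume.restrict D) ≤ ENNReal.ofReal (fsNorm n D s f) := by
  have hm := XI_memLp hD hDb hf I
  rw [hm.eLpNorm_eq_integral_rpow_norm (by simp) (by simp)]
  apply ENNReal.ofReal_le_ofReal
  simp only [ENNReal.toReal_ofNat, Real.rpow_two]
  rw [← one_div, ← Real.sqrt_eq_rpow]
  unfold fsNorm
  apply Real.sqrt_le_sqrt
  unfold fsNormSq
  have h1 : ∫ x in D, ‖XI n I f x‖^2 = ∫ x in D, ‖XI n (List.ofFn I.get) f x‖^2 := by rw [List.ofFn_get]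
  rw [h1]
  refine le_trans ?_ (Finset.single_le_sum (f := fun t => ∑ I : Fin t → Fin (2*n), ∫ x in D, ‖XI n (List.ofFn I) f x‖^2) (fun t _ => Finset.sum_nonneg fun _ _ => integral_nonneg fun _ => by positivity)
    (Finset.mem_range.2 (Nat.lt_succ_of_le hI)))
  exact Finset.single_le_sum (f := fun J : Fin I.length → Fin (2*n) => ∫ x in D, ‖XI n (List.ofFn J) f x‖^2)
    (fun _ _ => integral_nonneg fun _ => by positivity) (Finset.mem_univ I.get)

theorem fsNorm_le_Bd {n s : ℕ} {U : Set (Fin (2*n+1) → ℝ)} {a : ℝ} (ha : 0 ≤ a)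
    {F : (Fin (2*n+1) → ℝ) → ℝ} (h : Bd n s U s a F) : 
    fsNorm n U s F ≤ Real.sqrt (∑ t ∈ Finset.range (s+1), ((2*n)^t : ℝ)) * a := by
  have hint : ∀ I : List (Fin (2*n)), I.length ≤ s → ∫ x in U, ‖XI n I F x‖^2 ≤ a^2 := by
    intro I hI
    have h2 := h.2 I hI
    by_cases hi : Integrable (fun x => ‖XI n I F x‖^2) (volume.restrict U)
    · rw [eLpNorm_eq_lintegral_rpow_enorm_toReal (by simp) (by simp)] at h2
      simp only [ENNReal.toReal_ofNat] at h2
      have h3 := ENNReal.rpow_le_rpow h2 (z := 2) (by norm_num)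
      rw [← ENNReal.rpow_mul] at h3
      norm_num at h3
      rw [integral_eq_lintegral_of_nonneg_ae (Filter.Eventually.of_forall fun _ => by positivity) hi.aestronglyMeasurable]
      apply ENNReal.toReal_le_of_le_ofReal (by positivity)
      rw [ENNReal.ofReal_pow ha]
      refine le_trans (le_of_eq ?_) h3
      congr 1
      ext x
      rw [ENNReal.ofReal_pow (norm_nonneg _), ofReal_norm]
    · rw [integral_undef hi]; positivity
  unfold fsNorm
  rw [← Real.sqrt_sq ha, ← Real.sqrt_mul (Finset.sum_nonneg fun _ _ => by positivity)]
  apply Real.sqrt_le_sqrt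
  unfold fsNormSq
  rw [Finset.sum_mul]
  refine Finset.sum_le_sum fun t ht => ?_
  refine (Finset.sum_le_sum fun I _ => hint (List.ofFn I) (by simp at ht ⊢; omega)).trans (le_of_eq ?_)
  simp

theorem Bd_of_fs {n s : ℕ} (hn : 1 ≤ n) (hs : 2*n+3 ≤ s)
    {D D' : Set (Fin (2*n+1) → ℝ)} (hD : IsOpen D) (hDb : IsBounded D)
    (hD'b : IsBounded D') (hsub : closure D' ⊆ D) : ∃ C : ℝ, 0 ≤ C ∧ 
      ∀ f : (Fin (2*n+1) → ℝ) → ℝ, ContDiffOn ℝ ∞ f (closure D) → 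
        Bd n s D' s (C * fsNorm n D s f) f := by
  obtain ⟨C, hC, H⟩ := sobolev hn hD'b.isCompact_closure hD hsub
  refine ⟨C + 1, by positivity, fun f hf => ⟨fun I h1 h2 x hx => ?_, fun I h1 => ?_⟩⟩
  · have hN : 0 ≤ fsNorm n D s f := Real.sqrt_nonneg _
    refine (H (XI n I f) (XI_contDiffOn hD I (hf.mono subset_closure)) _ hN (fun J hJ => ?_) x 
      (subset_closure hx)).trans (by gcongr; linarith)
    rw [← XI_append]
    exact eLp_le_fsNorm hD hDb hf _ (by simp; omega)
  · have hN : 0 ≤ fsNorm n D s f := Real.sqrt_nonneg _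
    refine (eLpNorm_mono_measure _ (Measure.restrict_mono (subset_closure.trans hsub) le_rfl)).trans 
      ((eLp_le_fsNorm hD hDb hf I h1).trans (ENNReal.ofReal_le_ofReal ?_))
    nlinarith

theorem Bd_inv_f {n s : ℕ} {D' : Set (Fin (2*n+1) → ℝ)} (hD' : IsOpen D') (hD'b : IsBounded D')
    {C₀ a c : ℝ} (hC₀ : 0 < C₀) (ha : 0 ≤ a) (hc : |c| = 1) {f : (Fin (2*n+1) → ℝ) → ℝ} 
    (hf : ContDiffOn ℝ ∞ f D') (hf0 : ∀ x ∈ D', 1/C₀ ≤ f x) (hb : Bd n s D' s a f) :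
    ContDiffOn ℝ ∞ (fun x => c * (f x)⁻¹) D' ∧ 
    Bd n s D' s ((C₀ * (1 + (volume D').toReal)) * ((1 + C₀) * 2 ^ s * (1 + a)) ^ s) 
      (fun x => c * (f x)⁻¹) := by
  have hpos : ∀ x ∈ D', 0 < f x := fun x hx => lt_of_lt_of_le (by positivity) (hf0 x hx)
  have hsm : ContDiffOn ℝ ∞ (fun x => c * (f x)⁻¹) D' := 
    contDiffOn_const.mul (hf.inv fun x hx => (hpos x hx).ne')
  have hle : ∀ x ∈ D', |c * (f x)⁻¹| ≤ C₀ := by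
    intro x hx
    rw [abs_mul, hc, one_mul, abs_inv, abs_of_pos (hpos x hx)]
    have := inv_anti₀ (by positivity) (hf0 x hx)
    simpa using this
  have hv : 0 ≤ (volume D').toReal := ENNReal.toReal_nonneg
  have hκ : C₀ ≤ C₀ * (1 + (volume D').toReal) := by nlinarith
  refine ⟨hsm, Bd_inv hD' ha hC₀.le (by positivity) hc hf hsm hb 
    (fun x hx => by field_simp [(hpos x hx).ne']) hle ⟨?_, ?_⟩ s le_rfl⟩
  · intro I hI _ x hx
    obtain rfl : I = [] := List.length_eq_zero_iff.1 (by omega)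
    exact (hle x hx).trans hκ
  · intro I hI
    obtain rfl : I = [] := List.length_eq_zero_iff.1 (by omega)
    have hfin : volume D' ≠ ⊤ := hD'b.measure_lt_top.ne
    refine (eLpNorm_le_of_ae_bound (C := C₀) ((ae_restrict_iff' hD'.measurableSet).2 
      (Filter.Eventually.of_forall hle))).trans ?_
    rw [Measure.restrict_apply_univ, ENNReal.ofReal_mul hC₀.le, mul_comm]
    gcongr
    rw [ENNReal.ofReal_add zero_le_one hv, ENNReal.ofReal_toReal hfin, ENNReal.ofReal_one]
    simp only [ENNReal.toReal_ofNat]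
    rcases le_total (volume D') 1 with h | h
    · exact (ENNReal.rpow_le_one h (by norm_num)).trans le_self_add
    · refine le_trans ?_ le_add_self
      calc _ ≤ volume D' ^ (1:ℝ) := ENNReal.rpow_le_rpow_of_exponent_le h (by norm_num)
        _ = _ := ENNReal.rpow_one _

theorem Bd_congr {n s t : ℕ} {U : Set (Fin (2*n+1) → ℝ)} (hU : IsOpen U) {a : ℝ} 
    {u v : (Fin (2*n+1) → ℝ) → ℝ} (h : Set.EqOn u v U) (hu : Bd n s U t a u) : Bd n s U t a v := by
  refine ⟨fun I h1 h2 x hx => ?_, fun I h1 => ?_⟩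
  · rw [← XI_congr hU I h hx]; exact hu.1 I h1 h2 x hx
  · rw [← eLpNorm_congr_ae (f := XI n I u)]
    · exact hu.2 I h1
    · exact (ae_restrict_iff' hU.measurableSet).2 (Filter.Eventually.of_forall fun x hx => XI_congr hU I h hx)

/-- `‖1/f − 1/f′‖_{D′,s} ≤ C (1+‖f‖_{D,s})^s (1+‖f′‖_{D,s})^s ‖f−f′‖_{D,s}`. -/
theorem statement5 (n s : ℕ) (hn : 1 ≤ n) (hs : 2*n+3 ≤ s)
    (D D' : Set (Fin (2*n+1) → ℝ)) (hD : IsOpen D) (hDb : IsBounded D)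
    (hD' : IsOpen D') (hD'b : IsBounded D') (hsub : closure D' ⊆ D)
    (C₀ : ℝ) (hC₀ : 0 < C₀) :
    ∃ C > (0:ℝ), ∀ f f' : (Fin (2*n+1) → ℝ) → ℝ,
      ContDiffOn ℝ (⊤:ℕ∞) f (closure D) → ContDiffOn ℝ (⊤:ℕ∞) f' (closure D) →
      (∀ x ∈ closure D', 1/C₀ ≤ f x) → (∀ x ∈ closure D', 1/C₀ ≤ f' x) →
      fsNorm n D' s (fun x => (f x)⁻¹ - (f' x)⁻¹) ≤
        C * (1 + fsNorm n D s f)^s * (1 + fsNorm n D s f')^s *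
          fsNorm n D s (fun x => f x - f' x) := by
  obtain ⟨A, hA, HA⟩ := Bd_of_fs (s := s) hn hs hD hDb hD'b hsub
  set κ := C₀ * (1 + (volume D').toReal) with hκ
  have hκ0 : 0 ≤ κ := mul_nonneg hC₀.le (add_nonneg zero_le_one ENNReal.toReal_nonneg)
  set c := Real.sqrt (∑ t ∈ Finset.range (s+1), ((2*n)^t : ℝ)) with hc
  have hc0 : 0 ≤ c := Real.sqrt_nonneg _
  set B := κ * ((1 + C₀) * 2 ^ s * (1 + A)) ^ s with hB
  have hB0 : 0 ≤ B := by positivity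
  refine ⟨c * (2 ^ s * (A * (2 ^ s * (B * B)))) + 1, by positivity, fun f f' hf hf' h1 h1' => ?_⟩
  have hDD : D' ⊆ closure D := (subset_closure.trans hsub).trans subset_closure
  set N := fsNorm n D s f with hN
  set N' := fsNorm n D s f' with hN'
  set M := fsNorm n D s (fun x => f x - f' x) with hM
  have hN0 : 0 ≤ N := Real.sqrt_nonneg _
  have hN0' : 0 ≤ N' := Real.sqrt_nonneg _
  have hM0 : 0 ≤ M := Real.sqrt_nonneg _
  obtain ⟨s1, b1⟩ := Bd_inv_f (c := -1) hD' hD'b hC₀ (mul_nonneg hA hN0) (by simp) (hf.mono hDD)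
    (fun x hx => h1 x (subset_closure hx)) (HA f hf)
  obtain ⟨s2, b2⟩ := Bd_inv_f (c := 1) hD' hD'b hC₀ (mul_nonneg hA hN0') (by simp) (hf'.mono hDD)
    (fun x hx => h1' x (subset_closure hx)) (HA f' hf')
  have hle : ∀ P : ℝ, 0 ≤ P → κ * ((1 + C₀) * 2 ^ s * (1 + A * P)) ^ s ≤ B * (1 + P) ^ s := by
    intro P hP
    have : 1 + A * P ≤ (1 + A) * (1 + P) := by nlinarith
    calc κ * ((1 + C₀) * 2 ^ s * (1 + A * P)) ^ s ≤ 
        κ * ((1 + C₀) * 2 ^ s * ((1 + A) * (1 + P))) ^ s := by gcongr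
      _ = _ := by rw [hB, ← mul_assoc ((1 + C₀) * 2 ^ s), mul_pow _ (1 + P), ← mul_assoc]
  have b1 := b1.mono (hle N hN0)
  have b2 := b2.mono (hle N' hN0')
  have b12 := Bd_mul hD' (by positivity) (by positivity) s1 s2 b1 b2
  have sw := (hf.mono hDD).sub (hf'.mono hDD)
  have b := Bd_mul hD' (by positivity) (by positivity) sw (s1.mul s2) (HA _ (hf.sub hf')) b12
  have heq : Set.EqOn (fun x => (f x - f' x) * (-1 * (f x)⁻¹ * (1 * (f' x)⁻¹))) 
      (fun x => (f x)⁻¹ - (f' x)⁻¹) D' := by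
    intro x hx
    have p1 : 0 < f x := lt_of_lt_of_le (by positivity) (h1 x (subset_closure hx))
    have p2 : 0 < f' x := lt_of_lt_of_le (by positivity) (h1' x (subset_closure hx))
    simp only
    field_simp
    ring
  have b' := Bd_congr hD' heq b
  refine (fsNorm_le_Bd (by positivity) b').trans ?_
  rw [← hc]
  have hr : 0 ≤ (1 + N) ^ s * (1 + N') ^ s * M := by positivity
  calc _ = (c * (2 ^ s * (A * (2 ^ s * (B * B))))) * ((1 + N) ^ s * (1 + N') ^ s * M) := by ring
    _ ≤ (c * (2 ^ s * (A * (2 ^ s * (B * B)))) + 1) * ((1 + N) ^ s * (1 + N') ^ s * M) := by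
      nlinarith
    _ = _ := by ring

end
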